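/- For any finite family B₁,…,B_p of real symmetric m×m matrices, (Σᵣ ‖Bᵣ‖²)² ≥ 2 Σ_{r<s} ‖[Bᵣ,Bₛ]‖², where ‖·‖ is the Frobenius norm. (The DDVV inequality in its equivalent algebraic matrix form, proved by Ge–Tang and Lu.) -/

import Mathlib

open Matrix Finset

/-- Frobenius norm squared of a real matrix. -/
def frob2 {m : ℕ} (M : Matrix (Fin m) (Fin m) ℝ) : ℝ :=
  ∑ i, ∑ j, (M i j) ^ 2

/-!
Principal axes in the inner product space of symmetric matrices (the eigenbasis of
`M ↦ ∑ r, ⟪B r, M⟫ • B r`) give orthonormal symmetric `N k` and weights `μ k ≥ 0` such that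
`∑ r, ‖f (B r)‖ ^ 2 = ∑ k, μ k * ‖f (N k)‖ ^ 2` for every linear `f`. Using this for `f = id` and
for commutators turns the inequality into
`0 ≤ ∑ k, ∑ l, (1 - ‖⁅N k, N l⁆‖ ^ 2) * μ k * μ l`. It is enough that every principal submatrix of
`1 - ‖⁅N k, N l⁆‖ ^ 2` has nonnegative row sums, and the row of `k` is controlled by
`∑ b ∈ T, ‖⁅A, N b⁆‖ ^ 2 ≤ #T + 1`, valid for symmetric `A` of norm at most one, with `A = N k` and
`k` omitted from `T`.

For `A = diagonal l` the left side is `∑ i, ∑ j, (l i - l j) ^ 2 * ∑ b ∈ T, N b i j ^ 2`. Bounding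
`(l i - l j) ^ 2` by `1` accounts for `#T`. In the excess, Bessel's inequality bounds each inner sum
off the diagonal by `1 / 2`, and the excesses of `(l i - l j) ^ 2` over `1` sum to at most `2`
because the pairs `{i, j}` with `(l i - l j) ^ 2 > 1` share a common index: two disjoint ones would
force `∑ i, l i ^ 2 > 1`.
-/

section Copositivity

variable {R ι : Type*} [CommRing R]

theorem sum_sum_mul_mul_eq_of_symm {d : ι → ι → R} (hd : ∀ a b, d a b = d b a) (S : Finset ι)
    (x : ι → R) (t : R) : ∑ a ∈ S, ∑ b ∈ S, d a b * (x a * x b) =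
      ∑ a ∈ S, ∑ b ∈ S, d a b * ((x a - t) * (x b - t)) +
        2 * t * ∑ a ∈ S, (x a - t) * ∑ b ∈ S, d a b + t ^ 2 * ∑ a ∈ S, ∑ b ∈ S, d a b := by
  have hswap : ∑ a ∈ S, ∑ b ∈ S, d a b * (x b - t) = ∑ a ∈ S, ∑ b ∈ S, d a b * (x a - t) := by
    rw [sum_comm]
    simp only [hd]
  have hexpand (a b : ι) : d a b * (x a * x b) = d a b * ((x a - t) * (x b - t)) +
      (t * (d a b * (x a - t)) + t * (d a b * (x b - t))) + t ^ 2 * d a b := by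
    ring
  have hfactor (a : ι) : (x a - t) * ∑ b ∈ S, d a b = ∑ b ∈ S, d a b * (x a - t) := by
    rw [mul_comm, sum_mul]
  simp only [hexpand, hfactor, sum_add_distrib, ← mul_sum, hswap]
  ring

theorem sum_sum_mul_mul_nonneg_of_row_sums_nonneg [LinearOrder R] [IsStrictOrderedRing R]
    {d : ι → ι → R} (hd : ∀ a b, d a b = d b a)
    (hrow : ∀ T : Finset ι, ∀ a ∈ T, 0 ≤ ∑ b ∈ T, d a b) (S : Finset ι) {x : ι → R}
    (hx : ∀ a ∈ S, 0 ≤ x a) : 0 ≤ ∑ a ∈ S, ∑ b ∈ S, d a b * (x a * x b) := by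
  classical
  induction S using Finset.strongInduction generalizing x with
  | H S ih =>
    obtain rfl | hS := S.eq_empty_or_nonempty
    · simp
    -- Subtracting the smallest coordinate everywhere keeps `x ≥ 0` and kills one coordinate.
    obtain ⟨c, hcS, hc⟩ := S.exists_min_image x hS
    have hsub : ∀ a ∈ S, 0 ≤ x a - x c := fun a ha => sub_nonneg.2 (hc a ha)
    have herase : ∑ a ∈ S, ∑ b ∈ S, d a b * ((x a - x c) * (x b - x c)) =
        ∑ a ∈ S.erase c, ∑ b ∈ S.erase c, d a b * ((x a - x c) * (x b - x c)) := by
      simp only [← add_sum_erase S _ hcS, sub_self, zero_mul, mul_zero, sum_const_zero, zero_add]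
    rw [sum_sum_mul_mul_eq_of_symm hd S x (x c), herase]
    have hpeeled := ih _ (erase_ssubset hcS) fun a ha => hsub a (mem_of_mem_erase ha)
    have hcross : 0 ≤ ∑ a ∈ S, (x a - x c) * ∑ b ∈ S, d a b :=
      sum_nonneg fun a ha => mul_nonneg (hsub a ha) (hrow S a ha)
    have hconst : 0 ≤ ∑ a ∈ S, ∑ b ∈ S, d a b := sum_nonneg (hrow S)
    have hxc := hx c hcS
    positivity

end Copositivity

section Excess

variable {n : Type*}

theorem sum_sq_sub_le_card_add_one_mul (x : ℝ) (J : Finset n) (y : n → ℝ) :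
    ∑ j ∈ J, (x - y j) ^ 2 ≤ (#J + 1) * (x ^ 2 + ∑ j ∈ J, y j ^ 2) := by
  have hcs : (∑ j ∈ J, y j) ^ 2 ≤ #J * ∑ j ∈ J, y j ^ 2 := sq_sum_le_card_mul_sum_sq
  calc ∑ j ∈ J, (x - y j) ^ 2
      = #J * x ^ 2 - 2 * x * ∑ j ∈ J, y j + ∑ j ∈ J, y j ^ 2 := by
        simp only [sub_sq, sum_add_distrib, sum_sub_distrib, ← mul_sum, sum_const, nsmul_eq_mul]
    _ ≤ (#J + 1) * (x ^ 2 + ∑ j ∈ J, y j ^ 2) := by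
        linarith [sq_nonneg (x + ∑ j ∈ J, y j)]

variable [Fintype n] {l : n → ℝ}

theorem sum_posPart_sq_sub_sub_one_le_one (hl : ∑ i, l i ^ 2 ≤ 1) (c : n) :
    ∑ j, ((l c - l j) ^ 2 - 1)⁺ ≤ 1 := by
  classical
  set J : Finset n := {j | 0 ≤ (l c - l j) ^ 2 - 1}
  have hcJ : c ∉ J := by simp [J]
  have hcons : l c ^ 2 + ∑ j ∈ J, l j ^ 2 ≤ 1 := by
    rw [← sum_insert (f := fun j => l j ^ 2) hcJ]
    exact (sum_le_univ_sum_of_nonneg fun j => sq_nonneg (l j)).trans hl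
  calc ∑ j, ((l c - l j) ^ 2 - 1)⁺
      = ∑ j ∈ J, (l c - l j) ^ 2 - #J := by
        simp only [posPart_eq_ite, ← sum_filter, sum_sub_distrib, sum_const, nsmul_eq_mul,
          mul_one, J]
    _ ≤ (#J + 1) * (l c ^ 2 + ∑ j ∈ J, l j ^ 2) - #J := by
        gcongr
        exact sum_sq_sub_le_card_add_one_mul _ _ _
    _ ≤ (#J + 1) * 1 - #J := by gcongr
    _ = 1 := by ring

theorem eq_or_eq_of_one_lt_sub (hl : ∑ i, l i ^ 2 ≤ 1) {i j k t : n} (hij : 1 < l i - l j)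
    (hkt : 1 < l k - l t) : i = k ∨ j = t := by
  classical
  by_contra! ⟨hik, hjt⟩
  have hle (a : n) : |l a| ≤ 1 := (sq_le_one_iff_abs_le_one _).1 <|
    (single_le_sum (fun b _ => sq_nonneg (l b)) (mem_univ a)).trans hl
  have hsource {a b : n} (h : 1 < l a - l b) : 0 < l a := by linarith [(abs_le.1 (hle b)).1]
  have htarget {a b : n} (h : 1 < l a - l b) : l b < 0 := by linarith [(abs_le.1 (hle a)).2]
  have hne {a b : n} (ha : 0 < l a) (hb : l b < 0) : a ≠ b := by rintro rfl; exact ha.not_gt hb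
  have hsum : l i ^ 2 + (l k ^ 2 + (l j ^ 2 + l t ^ 2)) ≤ 1 := by
    refine le_trans (le_of_eq ?_) ((sum_le_univ_sum_of_nonneg (s := {i, k, j, t})
      fun a => sq_nonneg (l a)).trans hl)
    rw [sum_insert, sum_insert, sum_pair hjt] <;>
      simp [hik, hne (hsource hij), hne (hsource hkt), htarget hij, htarget hkt]
  nlinarith [sq_nonneg (l i + l j), sq_nonneg (l k + l t)]

theorem exists_forall_one_lt_sq_sub_imp_eq_or_eq [Nonempty n] (hl : ∑ i, l i ^ 2 ≤ 1) :
    ∃ c, ∀ i j, 1 < (l i - l j) ^ 2 → i = c ∨ j = c := by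
  have horient {i j : n} (h : 1 < (l i - l j) ^ 2) : 1 < l i - l j ∨ 1 < l j - l i := by
    rwa [one_lt_sq_iff_one_lt_abs, lt_abs, neg_sub] at h
  by_cases hedge : ∃ i j, 1 < l i - l j
  · obtain ⟨i₀, j₀, h₀⟩ := hedge
    have hstar : (∀ i j, 1 < l i - l j → i = i₀) ∨ ∀ i j, 1 < l i - l j → j = j₀ := by
      by_contra! ⟨⟨i, j, hij, hi⟩, ⟨k, t, hkt, ht⟩⟩
      have := eq_or_eq_of_one_lt_sub hl h₀ hij
      have := eq_or_eq_of_one_lt_sub hl h₀ hkt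
      have := eq_or_eq_of_one_lt_sub hl hij hkt
      grind
    obtain h | h := hstar
    · exact ⟨i₀, fun i j hij => (horient hij).imp (h i j) (h j i)⟩
    · exact ⟨j₀, fun i j hij => (horient hij).symm.imp (h j i) (h i j)⟩
  · push Not at hedge
    inhabit n
    exact ⟨default, fun i j hij =>
      ((horient hij).elim (hedge i j).not_gt (hedge j i).not_gt).elim⟩

theorem sum_sum_posPart_sq_sub_sub_one_le_two (hl : ∑ i, l i ^ 2 ≤ 1) :
    ∑ i, ∑ j, ((l i - l j) ^ 2 - 1)⁺ ≤ 2 := by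
  classical
  cases isEmpty_or_nonempty n
  · simp
  obtain ⟨c, hc⟩ := exists_forall_one_lt_sq_sub_imp_eq_or_eq hl
  have hrow := sum_posPart_sq_sub_sub_one_le_one hl c
  calc ∑ i, ∑ j, ((l i - l j) ^ 2 - 1)⁺
      ≤ ∑ i, ∑ j, ((if i = c then ((l c - l j) ^ 2 - 1)⁺ else 0) +
          if j = c then ((l c - l i) ^ 2 - 1)⁺ else 0) := by
        gcongr with i _ j _
        by_cases hij : 1 < (l i - l j) ^ 2
        · obtain rfl | rfl := hc i j hij
          · simp only [if_true]
            exact le_add_of_nonneg_right (by positivity)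
          · simp only [if_true, sub_sq_comm (l i)]
            exact le_add_of_nonneg_left (by positivity)
        · rw [posPart_eq_zero.2 (sub_nonpos.2 (not_lt.1 hij))]
          positivity
    _ = ∑ j, ((l c - l j) ^ 2 - 1)⁺ + ∑ i, ((l c - l i) ^ 2 - 1)⁺ := by
        simp only [sum_add_distrib, sum_ite_eq', mem_univ, if_true]
        rw [sum_comm]
        simp
    _ ≤ 2 := by linarith

end Excess

section PrincipalAxes

open Module
open scoped InnerProductSpace

variable {ι κ E F : Type*} [Fintype ι] [Fintype κ] [NormedAddCommGroup E] [InnerProductSpace ℝ E]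
  [NormedAddCommGroup F] [InnerProductSpace ℝ F]

theorem exists_orthonormalBasis_pairwise_sum_inner_mul_inner_eq_zero [FiniteDimensional ℝ E]
    (v : ι → E) : ∃ e : OrthonormalBasis (Fin (finrank ℝ E)) ℝ E,
      Pairwise fun k l => ∑ r, ⟪e k, v r⟫_ℝ * ⟪e l, v r⟫_ℝ = 0 := by
  set T : E →ₗ[ℝ] E := ∑ r, (InnerProductSpace.rankOne ℝ (v r) (v r)).toLinearMap
  have hT : T.IsSymmetric :=
    LinearMap.isSymmetric_sum _ fun r _ => InnerProductSpace.isSymmetric_rankOne_self (v r)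
  set e := hT.eigenvectorBasis rfl
  refine ⟨e, fun k l hkl => ?_⟩
  calc ∑ r, ⟪e k, v r⟫_ℝ * ⟪e l, v r⟫_ℝ
      = ⟪e k, T (e l)⟫_ℝ := by
        simp [T, inner_sum, real_inner_smul_right, real_inner_comm, mul_comm]
    _ = 0 := by
        rw [hT.apply_eigenvectorBasis, real_inner_smul_right, e.inner_eq_zero hkl, mul_zero]

theorem sum_norm_map_sq_eq_sum_mul (e : OrthonormalBasis κ ℝ E) {v : ι → E}
    (he : Pairwise fun k l => ∑ r, ⟪e k, v r⟫_ℝ * ⟪e l, v r⟫_ℝ = 0) (f : E →ₗ[ℝ] F) :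
    ∑ r, ‖f (v r)‖ ^ 2 = ∑ k, (∑ r, ⟪e k, v r⟫_ℝ ^ 2) * ‖f (e k)‖ ^ 2 := by
  have hexpand (r : ι) : ‖f (v r)‖ ^ 2 =
      ∑ k, ∑ l, ⟪e k, v r⟫_ℝ * ⟪e l, v r⟫_ℝ * ⟪f (e l), f (e k)⟫_ℝ := by
    conv_lhs => rw [← e.sum_repr' (v r), ← real_inner_self_eq_norm_sq]
    simp only [map_sum, map_smul, sum_inner, inner_sum, real_inner_smul_left,
      real_inner_smul_right, mul_assoc]
  simp only [hexpand]
  rw [sum_comm]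
  refine sum_congr rfl fun k _ => ?_
  rw [sum_comm, sum_eq_single k]
  · simp only [← sum_mul, real_inner_self_eq_norm_sq, sq]
  · intro l _ hlk
    rw [← sum_mul, he hlk.symm, zero_mul]
  · simp

theorem exists_orthonormal_forall_sum_norm_map_sq_eq_sum_mul (P : Submodule ℝ E)
    [FiniteDimensional ℝ P] {v : ι → E} (hv : ∀ r, v r ∈ P) :
    ∃ (e : Fin (finrank ℝ P) → E) (μ : Fin (finrank ℝ P) → ℝ), Orthonormal ℝ e ∧ (∀ k, e k ∈ P) ∧
      (∀ k, 0 ≤ μ k) ∧ ∀ f : E →ₗ[ℝ] F, ∑ r, ‖f (v r)‖ ^ 2 = ∑ k, μ k * ‖f (e k)‖ ^ 2 := by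
  obtain ⟨e, he⟩ := exists_orthonormalBasis_pairwise_sum_inner_mul_inner_eq_zero
    fun r => (⟨v r, hv r⟩ : P)
  exact ⟨fun k => e k, _, e.orthonormal.comp_linearIsometry P.subtypeₗᵢ, fun k => (e k).2,
    fun k => sum_nonneg fun r _ => sq_nonneg _,
    fun f => sum_norm_map_sq_eq_sum_mul e he (f ∘ₗ P.subtype)⟩

end PrincipalAxes

theorem two_mul_sum_sum_ite_lt {ι R : Type*} [Fintype ι] [LinearOrder ι] [Semiring R]
    {f : ι → ι → R} (hsymm : ∀ r s, f r s = f s r) (hdiag : ∀ r, f r r = 0) :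
    2 * ∑ r, ∑ s, (if r < s then f r s else 0) = ∑ r, ∑ s, f r s := by
  have hsplit (r s : ι) : f r s = (if r < s then f r s else 0) + if s < r then f s r else 0 := by
    obtain h | rfl | h := lt_trichotomy r s
    · simp [h, h.not_gt]
    · simp [hdiag]
    · simp [h, h.not_gt, hsymm r s]
  rw [two_mul]
  nth_rw 2 [sum_comm]
  simp only [← sum_add_distrib, ← hsplit]

theorem isSymm_iff_isSelfAdjoint {n : Type*} {M : Matrix n n ℝ} :
    M.IsSymm ↔ IsSelfAdjoint M := by
  rw [← isHermitian_iff_isSelfAdjoint, IsHermitian, conjTranspose_eq_transpose_of_trivial, IsSymm]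

section Frobenius

open scoped InnerProductSpace

attribute [local instance] Matrix.frobeniusNormedAddCommGroup Matrix.frobeniusNormedSpace

variable {m n κ : Type*} [Fintype m] [Fintype n]

theorem frobenius_norm_sq_eq_sum (M : Matrix m n ℝ) : ‖M‖ ^ 2 = ∑ i, ∑ j, M i j ^ 2 := by
  rw [frobenius_norm_def, ← Real.sqrt_eq_rpow, Real.sq_sqrt (by positivity)]
  simp only [Real.norm_eq_abs, Real.rpow_two, sq_abs]

/-- The inner product `tr (Mᵀ N)` on real matrices, which induces the Frobenius norm. -/
noncomputable local instance frobeniusInnerProductSpace : InnerProductSpace ℝ (Matrix m n ℝ) where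
  inner M N := (Mᵀ * N).trace
  norm_sq_eq_re_inner M := by
    rw [frobenius_norm_sq_eq_sum, sum_comm]
    simp only [Matrix.trace, diag_apply, Matrix.mul_apply, transpose_apply, RCLike.re_to_real, sq]
  conj_inner_symm M N := by
    rw [← trace_transpose, transpose_mul, transpose_transpose, conj_trivial]
  add_left M N P := by rw [transpose_add, Matrix.add_mul, trace_add]
  smul_left M N a := by rw [transpose_smul, smul_mul, trace_smul, smul_eq_mul, conj_trivial]

theorem frobenius_inner_eq_trace (M N : Matrix m n ℝ) : ⟪M, N⟫_ℝ = (Mᵀ * N).trace := rfl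

theorem frobenius_inner_single_right [DecidableEq m] [DecidableEq n] (M : Matrix m n ℝ) (i : m)
    (j : n) (c : ℝ) : ⟪M, single i j c⟫_ℝ = M i j * c := by
  rw [frobenius_inner_eq_trace, trace_mul_single, transpose_apply, MulOpposite.smul_eq_mul_unop,
    MulOpposite.unop_op]

theorem two_mul_sum_sq_apply_le_one_of_orthonormal {N : κ → Matrix n n ℝ} (hN : Orthonormal ℝ N)
    (hsymm : ∀ b, (N b).IsSymm) (T : Finset κ) {i j : n} (hij : i ≠ j) :
    2 * ∑ b ∈ T, N b i j ^ 2 ≤ 1 := by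
  classical
  set X : Matrix n n ℝ := single i j 1 + single j i 1
  have hinner {M : Matrix n n ℝ} (hM : M.IsSymm) : ⟪M, X⟫_ℝ = 2 * M i j := by
    rw [inner_add_right, frobenius_inner_single_right, frobenius_inner_single_right,
      hM.apply i j]
    ring
  have hX : ‖X‖ ^ 2 = 2 := by
    have hsymmX : X.IsSymm := by simp [X, IsSymm, add_comm]
    rw [← real_inner_self_eq_norm_sq, hinner hsymmX]
    simp [X, hij]
  have hbessel := hN.sum_inner_products_le X (s := T)
  simp only [hX, hinner (hsymm _), Real.norm_eq_abs, sq_abs, mul_pow, ← mul_sum] at hbessel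
  linarith

theorem norm_lie_comm (M N : Matrix n n ℝ) : ‖⁅M, N⁆‖ = ‖⁅N, M⁆‖ := by
  rw [Ring.lie_def, Ring.lie_def, norm_sub_rev]

theorem norm_lie_self (M : Matrix n n ℝ) : ‖⁅M, M⁆‖ = 0 := by
  rw [Ring.lie_def, sub_self, norm_zero]

theorem norm_lie_diagonal_sq [DecidableEq n] (l : n → ℝ) (N : Matrix n n ℝ) :
    ‖⁅diagonal l, N⁆‖ ^ 2 = ∑ i, ∑ j, (l i - l j) ^ 2 * N i j ^ 2 := by
  simp only [frobenius_norm_sq_eq_sum, Ring.lie_def, Matrix.sub_apply, diagonal_mul, mul_diagonal,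
    mul_comm (N _ _), ← sub_mul, mul_pow]

theorem norm_diagonal_sq [DecidableEq n] (l : n → ℝ) : ‖diagonal l‖ ^ 2 = ∑ i, l i ^ 2 := by
  rw [frobenius_norm_diagonal, EuclideanSpace.real_norm_sq_eq]

theorem frobenius_inner_conjStarAlgAut [DecidableEq n] (U : unitary (Matrix n n ℝ))
    (M N : Matrix n n ℝ) :
    ⟪Unitary.conjStarAlgAut ℝ _ U M, Unitary.conjStarAlgAut ℝ _ U N⟫_ℝ = ⟪M, N⟫_ℝ := by
  simp only [frobenius_inner_eq_trace, ← conjTranspose_eq_transpose_of_trivial,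
    ← star_eq_conjTranspose, ← map_star, ← map_mul]
  rw [Unitary.conjStarAlgAut_apply, trace_mul_cycle, Unitary.coe_star_mul_self, one_mul]

theorem sum_norm_lie_diagonal_sq_le_card_add_one [DecidableEq n] {N : κ → Matrix n n ℝ}
    (hN : Orthonormal ℝ N) (hsymm : ∀ b, (N b).IsSymm) (T : Finset κ) {l : n → ℝ}
    (hl : ∑ i, l i ^ 2 ≤ 1) : ∑ b ∈ T, ‖⁅diagonal l, N b⁆‖ ^ 2 ≤ #T + 1 := by
  have hentry (i j : n) : ((l i - l j) ^ 2 - 1)⁺ * ∑ b ∈ T, N b i j ^ 2 ≤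
      ((l i - l j) ^ 2 - 1)⁺ / 2 := by
    obtain rfl | hij := eq_or_ne i j
    · simp
    · have := two_mul_sum_sq_apply_le_one_of_orthonormal hN hsymm T hij
      nlinarith [posPart_nonneg ((l i - l j) ^ 2 - 1)]
  calc ∑ b ∈ T, ‖⁅diagonal l, N b⁆‖ ^ 2
      ≤ ∑ b ∈ T, ∑ i, ∑ j, (1 + ((l i - l j) ^ 2 - 1)⁺) * N b i j ^ 2 := by
        simp only [norm_lie_diagonal_sq]
        gcongr with b _ i _ j _
        linarith [le_posPart ((l i - l j) ^ 2 - 1)]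
    _ = ∑ b ∈ T, ‖N b‖ ^ 2 + ∑ i, ∑ j, ((l i - l j) ^ 2 - 1)⁺ * ∑ b ∈ T, N b i j ^ 2 := by
        simp only [add_mul, one_mul, sum_add_distrib, ← frobenius_norm_sq_eq_sum, mul_sum]
        rw [sum_comm]
        simp only [sum_comm (s := T)]
    _ ≤ #T + ∑ i, ∑ j, ((l i - l j) ^ 2 - 1)⁺ / 2 := by
        gcongr with i _ j _
        · simp [hN.1]
        · exact hentry i j
    _ ≤ #T + 1 := by
        simp only [← sum_div]
        linarith [sum_sum_posPart_sq_sub_sub_one_le_two hl]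

theorem sum_norm_lie_sq_le_card_add_one {N : κ → Matrix n n ℝ} (hN : Orthonormal ℝ N)
    (hsymm : ∀ b, (N b).IsSymm) (T : Finset κ) {A : Matrix n n ℝ} (hA : A.IsSymm)
    (hA1 : ‖A‖ ≤ 1) : ∑ b ∈ T, ‖⁅A, N b⁆‖ ^ 2 ≤ #T + 1 := by
  classical
  have hherm : A.IsHermitian := isSymm_iff_isSelfAdjoint.1 hA
  set φ := Unitary.conjStarAlgAut ℝ _ (star hherm.eigenvectorUnitary)
  have hφA : φ A = diagonal hherm.eigenvalues := hherm.conjStarAlgAut_star_eigenvectorUnitary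
  let φᵢ : Matrix n n ℝ →ₗᵢ[ℝ] Matrix n n ℝ :=
    φ.toAlgEquiv.toLinearMap.isometryOfInner (frobenius_inner_conjStarAlgAut _)
  have hnorm (M : Matrix n n ℝ) : ‖φ M‖ = ‖M‖ := φᵢ.norm_map M
  have hφN : Orthonormal ℝ fun b => φ (N b) := hN.comp_linearIsometry φᵢ
  have hφsymm (b : κ) : (φ (N b)).IsSymm :=
    isSymm_iff_isSelfAdjoint.2 ((isSymm_iff_isSelfAdjoint.1 (hsymm b)).map φ)
  have hl : ∑ i, hherm.eigenvalues i ^ 2 ≤ 1 := by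
    rw [← norm_diagonal_sq, ← hφA, hnorm]
    exact pow_le_one₀ (norm_nonneg A) hA1
  have hlie (b : κ) : ‖⁅A, N b⁆‖ = ‖⁅diagonal hherm.eigenvalues, φ (N b)⁆‖ := by
    rw [← hnorm, ← hφA]
    simp only [Ring.lie_def, map_sub, map_mul]
  simpa only [hlie] using sum_norm_lie_diagonal_sq_le_card_add_one hφN hφsymm T hl

theorem sum_norm_lie_sq_le_card {N : κ → Matrix n n ℝ} (hN : Orthonormal ℝ N)
    (hsymm : ∀ b, (N b).IsSymm) {T : Finset κ} {a : κ} (ha : a ∈ T) :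
    ∑ b ∈ T, ‖⁅N a, N b⁆‖ ^ 2 ≤ #T := by
  classical
  calc ∑ b ∈ T, ‖⁅N a, N b⁆‖ ^ 2
      = ∑ b ∈ T.erase a, ‖⁅N a, N b⁆‖ ^ 2 := by
        rw [← add_sum_erase T _ ha, norm_lie_self, zero_pow two_ne_zero, zero_add]
    _ ≤ #(T.erase a) + 1 :=
        sum_norm_lie_sq_le_card_add_one hN hsymm _ (hsymm a) (hN.1 a).le
    _ = #T := by exact_mod_cast card_erase_add_one ha

theorem sum_sum_mul_norm_lie_sq_le_sq_sum [Fintype κ] {N : κ → Matrix n n ℝ}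
    (hN : Orthonormal ℝ N) (hsymm : ∀ b, (N b).IsSymm) {μ : κ → ℝ} (hμ : ∀ a, 0 ≤ μ a) :
    ∑ a, ∑ b, μ a * μ b * ‖⁅N a, N b⁆‖ ^ 2 ≤ (∑ a, μ a) ^ 2 := by
  have hcop := sum_sum_mul_mul_nonneg_of_row_sums_nonneg (d := fun a b => 1 - ‖⁅N a, N b⁆‖ ^ 2)
    (fun a b => by simp only [norm_lie_comm]) (fun T a ha => by
      simpa using sum_norm_lie_sq_le_card hN hsymm ha) univ fun a _ => hμ a
  rw [sq, sum_mul_sum, ← sub_nonneg]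
  simpa only [sub_mul, one_mul, sum_sub_distrib, mul_comm (‖_‖ ^ 2)] using hcop

theorem ddvv_matrix_general {ι : Type*} [Fintype ι] (B : ι → Matrix n n ℝ)
    (hB : ∀ r, (B r).IsSymm) : ∑ r, ∑ s, ‖⁅B r, B s⁆‖ ^ 2 ≤ (∑ r, ‖B r‖ ^ 2) ^ 2 := by
  obtain ⟨N, μ, hN, hNmem, hμ, hmap⟩ :=
    exists_orthonormal_forall_sum_norm_map_sq_eq_sum_mul (F := Matrix n n ℝ)
      (selfAdjoint.submodule ℝ (Matrix n n ℝ)) fun r => isSymm_iff_isSelfAdjoint.1 (hB r)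
  have hsymm (k) : (N k).IsSymm := isSymm_iff_isSelfAdjoint.2 (hNmem k)
  have htrace : ∑ r, ‖B r‖ ^ 2 = ∑ k, μ k := by simpa [hN.1] using hmap LinearMap.id
  have hlie (A : Matrix n n ℝ) : ∑ r, ‖⁅A, B r⁆‖ ^ 2 = ∑ k, μ k * ‖⁅A, N k⁆‖ ^ 2 := by
    classical
    exact hmap (LinearMap.mulLeft ℝ A - LinearMap.mulRight ℝ A)
  calc ∑ r, ∑ s, ‖⁅B r, B s⁆‖ ^ 2
      = ∑ r, ∑ k, μ k * ‖⁅B r, N k⁆‖ ^ 2 := by simp only [hlie]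
    _ = ∑ k, μ k * ∑ r, ‖⁅N k, B r⁆‖ ^ 2 := by
        rw [sum_comm]
        simp only [mul_sum, norm_lie_comm (B _)]
    _ = ∑ k, ∑ l, μ k * μ l * ‖⁅N k, N l⁆‖ ^ 2 := by simp only [hlie, mul_sum, mul_assoc]
    _ ≤ (∑ r, ‖B r‖ ^ 2) ^ 2 := by
        rw [htrace]
        exact sum_sum_mul_norm_lie_sq_le_sq_sum hN hsymm hμ

theorem frob2_eq_norm_sq {m : ℕ} (M : Matrix (Fin m) (Fin m) ℝ) : frob2 M = ‖M‖ ^ 2 :=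
  (frobenius_norm_sq_eq_sum M).symm

end Frobenius

/-- The DDVV inequality in its algebraic matrix form (Ge–Tang, Lu):
for any family of real symmetric matrices,
(Σᵣ ‖Bᵣ‖²)² ≥ 2 Σ_{r<s} ‖[Bᵣ,Bₛ]‖². -/
theorem ddvv_matrix {m p : ℕ} (B : Fin p → Matrix (Fin m) (Fin m) ℝ)
    (hB : ∀ r, (B r).IsSymm) :
    (∑ r, frob2 (B r)) ^ 2 ≥
      2 * ∑ r, ∑ s, (if r < s then frob2 (B r * B s - B s * B r) else 0) := by
  simp only [frob2_eq_norm_sq, ← Ring.lie_def]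
  exact (two_mul_sum_sum_ite_lt (fun r s => by rw [norm_lie_comm])
    fun r => by simp [norm_lie_self]).trans_le (ddvv_matrix_general B hB)
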